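/- arXiv:1611.06291 — 4 statements merged into one kernel-verified Lean document; each statement's English description precedes it below -/
import Mathlib

section
/- Let K be a field equipped with an additive (nonarchimedean) valuation v : K → ℝ ∪ {∞}, i.e. v(ab) = v(a) + v(b), v(a+b) ≥ min(v(a), v(b)), and v(a) = ∞ if and only if a = 0. Let n ≥ 2 and let x_1, …, x_n ∈ K be pairwise distinct elements with x_1 + ⋯ + x_n = 0, and assume v(k·1_K) = 0 for every integer 1 ≤ k ≤ n (e.g. the residue characteristic exceeds n). Then v(x_i) ≥ min_{j ≠ k} v(x_j − x_k) for every i; consequently min_{1 ≤ i ≤ n} v(x_i) = min_{j ≠ k} v(x_j − x_k). -/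
/-!
Since `∑ x_j = 0`, one has `n • x_i = ∑ j, (x_i - x_j)`. As `v n = 0`, the left side has valuation
`v (x_i)`, and the ultrametric inequality bounds the right side below by the minimum of the
`v (x_j - x_k)`. The reverse inequality between the minima is the ultrametric inequality for
`x_j - x_k` together with `v (-a) = v a`.
-/

open scoped BigOperators

/-- Let `K` be a field with an additive nonarchimedean valuation
`v : K → ℝ ∪ {∞}`.  If `x₁, …, xₙ` (`n ≥ 2`) are pairwise distinct elements summing to `0`,
and `v(k·1) = 0` for every integer `1 ≤ k ≤ n`, then every `v(xᵢ)` is at least the minimum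
of `v(xⱼ - xₖ)` over ordered pairs `j ≠ k`; consequently
`min_i v(xᵢ) = min_{j ≠ k} v(xⱼ - xₖ)`. -/
theorem statement0 {K : Type*} [Field K] (v : K → WithTop ℝ)
    (hv_mul : ∀ a b : K, v (a * b) = v a + v b)
    (hv_add : ∀ a b : K, min (v a) (v b) ≤ v (a + b))
    (hv_top : ∀ a : K, v a = ⊤ ↔ a = 0)
    (n : ℕ) (hn : 2 ≤ n) (x : Fin n → K)
    (hdist : Function.Injective x)
    (hsum : ∑ i, x i = 0)
    (hres : ∀ k : ℕ, 1 ≤ k → k ≤ n → v ((k : K)) = 0) :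
    (∀ i : Fin n,
      (Finset.univ.filter fun p : Fin n × Fin n => p.1 ≠ p.2).inf
        (fun p => v (x p.1 - x p.2)) ≤ v (x i)) ∧
    Finset.univ.inf (fun i => v (x i)) =
      (Finset.univ.filter fun p : Fin n × Fin n => p.1 ≠ p.2).inf
        (fun p => v (x p.1 - x p.2)) := by
  have hneg : ∀ a : K, v (-a) = v a := by
    have h1 : v 1 = 0 := by simpa using hres 1 le_rfl (by omega)
    have h2 : v (-1) + v (-1) = 0 := by rw [← hv_mul]; simpa using h1
    have h3 : v (-1) = 0 := by
      generalize v (-1) = t at h2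
      induction t using WithTop.recTopCoe with
      | top => simp at h2
      | coe r =>
        norm_cast at h2 ⊢
        linarith
    intro a
    rw [neg_eq_neg_one_mul, hv_mul, h3, zero_add]
  have hsumle : ∀ (m : WithTop ℝ) (f : Fin n → K) (s : Finset (Fin n)),
      (∀ j, m ≤ v (f j)) → m ≤ v (∑ j ∈ s, f j) := by
    intro m f s hf
    refine Finset.sum_induction f (fun a => m ≤ v a)
      (fun a b ha hb => (le_min ha hb).trans (hv_add a b)) ?_ (fun j _ => hf j)
    simp [(hv_top 0).2 rfl]
  have key : ∀ i : Fin n,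
      (Finset.univ.filter fun p : Fin n × Fin n => p.1 ≠ p.2).inf
        (fun p => v (x p.1 - x p.2)) ≤ v (x i) := by
    intro i
    have hi : ∑ j, (x i - x j) = (n : K) * x i := by
      simp [Finset.sum_sub_distrib, hsum]
    have hvi : v (x i) = v (∑ j, (x i - x j)) := by
      rw [hi, hv_mul, hres n (by omega) le_rfl, zero_add]
    rw [hvi]
    refine hsumle _ _ _ fun j => ?_
    by_cases hij : i = j
    · -- the diagonal term is `v 0 = ⊤`
      simp [hij, (hv_top 0).2 rfl]
    · exact Finset.inf_le (f := fun p : Fin n × Fin n => v (x p.1 - x p.2)) (b := (i, j))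
        (by simpa using hij)
  refine ⟨key, le_antisymm (Finset.le_inf fun p _ => ?_) (Finset.le_inf fun i _ => key i)⟩
  rw [sub_eq_add_neg]
  refine le_trans (le_min ?_ ?_) (hv_add _ _)
  · exact Finset.inf_le (f := fun i => v (x i)) (Finset.mem_univ p.1)
  · rw [hneg]
    exact Finset.inf_le (f := fun i => v (x i)) (Finset.mem_univ p.2)
end

section
/- Let F be a nonarchimedean local field with residue field 𝔣 and normalized additive valuation ord, extended to an algebraic closure F̄ of F, and suppose char(𝔣) > n. Let γ ∈ GL_n(F) be regular semisimple with eigenvalues r_1, …, r_n ∈ F̄ (pairwise distinct), all of valuation 0. Then the minimum of the valuations of the roots of the polynomial p_γ(X) = ch_γ(X + Tr(γ)/n) — that is, min_i ord(r_i − Tr(γ)/n), which equals the minimal slope of the Newton polygon of p_γ — is equal to min_{i ≠ j} ord(r_i − r_j). -/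
open scoped BigOperators

/-!
Write `t = Tr(γ)/n`. Comparing the subleading coefficients of the characteristic polynomial gives
`Tr(γ) = ∑ rᵢ`, so `n (rᵢ - t) = ∑ⱼ (rᵢ - rⱼ)`. As `v n = 0`, the ultrametric inequality yields
`v (rᵢ - t) ≥ minⱼ v (rᵢ - rⱼ)`, where the term `j = i` has valuation `⊤`. Conversely,
`rᵢ - rⱼ = (rᵢ - t) - (rⱼ - t)` bounds every `v (rᵢ - rⱼ)` below by the minimum of the `v (rᵢ - t)`.
For `n = 1` both minima equal `⊤`.
-/

lemma le_v_sum {K ι : Type*} [Field K] {v : K → WithTop ℝ}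
    (hv_add : ∀ a b : K, min (v a) (v b) ≤ v (a + b))
    (hv_top : ∀ a : K, v a = ⊤ ↔ a = 0) (m : WithTop ℝ) (f : ι → K) (s : Finset ι)
    (h : ∀ j ∈ s, m ≤ v (f j)) : m ≤ v (∑ j ∈ s, f j) :=
  Finset.sum_induction f (fun x => m ≤ v x)
    (fun a b ha hb => (le_min ha hb).trans (hv_add a b))
    (by rw [(hv_top 0).2 rfl]; exact le_top) h

/-- `v (-1) = 0` because `2 v (-1) = v 1` and `WithTop ℝ` has no torsion. -/
lemma v_neg_of_v_one {K : Type*} [Field K] {v : K → WithTop ℝ}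
    (hv_mul : ∀ a b : K, v (a * b) = v a + v b) (h1 : v 1 = 0) (a : K) : v (-a) = v a := by
  have h := hv_mul (-1) (-1)
  rw [neg_one_mul, neg_neg, h1] at h
  have h' : v (-1) = 0 := by
    cases hx : v (-1) with
    | top => simp [hx] at h
    | coe x =>
      rw [hx] at h
      norm_cast at h ⊢
      linarith
  rw [← neg_one_mul, hv_mul, h', zero_add]

lemma trace_eq_sum_of_charpoly {K : Type*} [Field K] {n : ℕ} (hn : 0 < n)
    (γ : Matrix (Fin n) (Fin n) K) (r : Fin n → K)
    (hchar : γ.charpoly = ∏ i, (Polynomial.X - Polynomial.C (r i))) :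
    γ.trace = ∑ i, r i := by
  haveI : Nonempty (Fin n) := ⟨⟨0, hn⟩⟩
  have hcard : 0 < (Finset.univ : Finset (Fin n)).card := by simpa using hn
  have h := Polynomial.prod_X_sub_C_coeff_card_pred Finset.univ r hcard
  rw [Matrix.trace_eq_neg_charpoly_coeff, hchar, ← Finset.card_univ, h, neg_neg]

/-- Let `K = F̄` be (an algebraic closure of) a nonarchimedean local field,
equipped with the extension `v` of the normalized additive valuation `ord`, and suppose the
residue characteristic exceeds `n` (encoded by `v(k·1) = 0` for `1 ≤ k ≤ n`).  Let
`γ ∈ GL_n(F)` be regular semisimple with pairwise distinct eigenvalues `r₁, …, rₙ` of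
valuation `0` (so its characteristic polynomial is `∏ (X - rᵢ)`).  Then the minimum of the
valuations of the roots of `p_γ(X) = ch_γ(X + Tr(γ)/n)`, i.e. `min_i v(rᵢ - Tr(γ)/n)`
(the minimal slope of the Newton polygon of `p_γ`), equals `min_{i ≠ j} v(rᵢ - rⱼ)`. -/
theorem statement1 {K : Type*} [Field K] (v : K → WithTop ℝ)
    (hv_mul : ∀ a b : K, v (a * b) = v a + v b)
    (hv_add : ∀ a b : K, min (v a) (v b) ≤ v (a + b))
    (hv_top : ∀ a : K, v a = ⊤ ↔ a = 0)
    (n : ℕ) (hn : 0 < n)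
    (γ : Matrix (Fin n) (Fin n) K) (hγ : IsUnit γ)
    (r : Fin n → K) (hdist : Function.Injective r)
    (hchar : γ.charpoly = ∏ i, (Polynomial.X - Polynomial.C (r i)))
    (hval : ∀ i, v (r i) = 0)
    (hres : ∀ k : ℕ, 1 ≤ k → k ≤ n → v ((k : K)) = 0) :
    Finset.univ.inf (fun i => v (r i - γ.trace / (n : K))) =
      (Finset.univ.filter fun p : Fin n × Fin n => p.1 ≠ p.2).inf
        (fun p => v (r p.1 - r p.2)) := by
  have hn0 : (n : K) ≠ 0 := fun h => by
    have := hres n hn le_rfl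
    rw [(hv_top _).2 h] at this
    exact WithTop.top_ne_zero this
  have h1 : v 1 = 0 := by simpa using hres 1 le_rfl hn
  have htr := trace_eq_sum_of_charpoly hn γ r hchar
  apply le_antisymm
  · refine Finset.le_inf fun p _ => ?_
    have hp : r p.1 - r p.2 = (r p.1 - γ.trace / n) + -(r p.2 - γ.trace / n) := by ring
    rw [hp]
    refine le_trans (le_min ?_ ?_) (hv_add _ _)
    · exact Finset.inf_le (f := fun i => v (r i - γ.trace / (n : K))) (Finset.mem_univ p.1)
    · rw [v_neg_of_v_one hv_mul h1]
      exact Finset.inf_le (f := fun i => v (r i - γ.trace / (n : K))) (Finset.mem_univ p.2)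
  · refine Finset.le_inf fun i _ => ?_
    have hsum : (n : K) * (r i - γ.trace / n) = ∑ j, (r i - r j) := by
      rw [mul_sub, mul_div_cancel₀ _ hn0, htr, Finset.sum_sub_distrib]
      simp
    have hvi : v (r i - γ.trace / n) = v (∑ j, (r i - r j)) := by
      rw [← hsum, hv_mul, hres n hn le_rfl, zero_add]
    rw [hvi]
    refine le_v_sum hv_add hv_top _ _ _ fun j _ => ?_
    by_cases hij : i = j
    · rw [(hv_top _).2 (by rw [hij, sub_self])]
      exact le_top
    · exact Finset.inf_le (f := fun p : Fin n × Fin n => v (r p.1 - r p.2))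
        (b := (i, j)) (by simpa using hij)
end

section
/- Let p be a prime, q a power of p, and n a positive integer with p ∤ n. For every divisor m of n, the number of elements x ∈ 𝔽_{q^n} such that Tr_{𝔽_{q^n}/𝔽_q}(x) = 0 and [𝔽_q(x) : 𝔽_q] = m equals Σ_{d | m} μ(m/d)·q^{d−1}, where μ is the Möbius function. -/
open scoped BigOperators

/-!
For `d ∣ n` the elements of `K` of degree dividing `d` over `F` form the subfield of `q ^ d`
elements, an `F`-space of dimension `d`. The trace of `K / F` restricts to a functional on it
which is nonzero, since it sends `1` to `n ≠ 0` in `F` (this is where `p ∤ n` enters). Hence exactly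
`q ^ (d - 1)` elements of trace zero have degree dividing `d`
(`card_trace_zero_natDegree_dvd`), and Möbius inversion over the divisors of `n` gives the count
of those of degree exactly `m`.
-/

/-- The subfield of degree `d`: its elements all satisfy `x ^ q ^ d = x`, and that equation has at
most `q ^ d` solutions, so they are the only ones; the divisibility criterion for irreducible
factors of `X ^ q ^ d - X` then describes membership by degree. -/
lemma exists_subfield_mem_iff (p d : ℕ) [Fact p.Prime] (F K : Type*) [Field F] [Field K]
    [Algebra F K] [Fintype F] [Fintype K] [FiniteDimensional F K] [CharP F p] (hd0 : d ≠ 0)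
    (hd : d ∣ Module.finrank F K) :
    ∃ E : IntermediateField F K, Module.finrank F E = d ∧
      ∀ x : K, x ∈ E ↔ (minpoly F x).natDegree ∣ d := by
  classical
  have : NeZero d := ⟨hd0⟩
  obtain ⟨φ⟩ := FiniteField.nonempty_algHom_of_finrank_dvd (F := F)
    (K := FiniteField.Extension F p d) (L := K)
    (by rwa [FiniteField.finrank_extension])
  have hfin : Module.finrank F φ.fieldRange = d :=
    (AlgEquiv.ofInjectiveField φ).toLinearEquiv.finrank_eq.symm.trans
      (FiniteField.finrank_extension F p d)
  have hcardE : Nat.card φ.fieldRange = Nat.card F ^ d := by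
    rw [Module.natCard_eq_pow_finrank (K := F), hfin]
  have hq1 : 1 < Nat.card F := Finite.one_lt_card
  have hqd : 1 < Nat.card F ^ d := Nat.one_lt_pow hd0 hq1
  have hroot : ∀ x : K, x ^ Nat.card F ^ d = x ↔ (minpoly F x).natDegree ∣ d := by
    intro x
    rw [Irreducible.natDegree_dvd_iff_dvd_X_pow_card_pow_sub_X
      (minpoly.irreducible (Algebra.IsIntegral.isIntegral x)), minpoly.dvd_iff]
    simp [sub_eq_zero]
  refine ⟨φ.fieldRange, hfin, fun x => ?_⟩
  rw [← hroot]
  let R : Finset K := (Polynomial.X ^ Nat.card F ^ d - Polynomial.X : Polynomial K).roots.toFinset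
  have hR : ∀ y, y ∈ R ↔ y ^ Nat.card F ^ d = y := by
    intro y
    simp only [R, Multiset.mem_toFinset]
    rw [Polynomial.mem_roots (FiniteField.X_pow_card_sub_X_ne_zero K hqd)]
    simp [sub_eq_zero]
  let S : Finset K := Finset.univ.filter (· ∈ φ.fieldRange)
  have hS : S.card = Nat.card F ^ d := by
    rw [← hcardE, Nat.card_eq_fintype_card, Fintype.card_subtype]
  have hSR : S ⊆ R := by
    intro y hy
    have hy' : y ∈ φ.fieldRange := by simpa [S] using hy
    rw [hR]
    have := FiniteField.pow_card (K := φ.fieldRange) ⟨y, hy'⟩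
    rw [← Nat.card_eq_fintype_card, hcardE] at this
    simpa using congrArg Subtype.val this
  have hRc : R.card ≤ S.card := by
    rw [hS]
    refine (Multiset.toFinset_card_le _).trans ((Polynomial.card_roots' _).trans ?_)
    rw [FiniteField.X_pow_card_sub_X_natDegree_eq K hqd]
  rw [← hR, ← Finset.eq_of_subset_of_card_le hSR hRc]
  simp [S]

lemma card_trace_zero_natDegree_dvd (p d : ℕ) [Fact p.Prime] (F K : Type*) [Field F] [Field K]
    [Algebra F K] [Fintype F] [Fintype K] [FiniteDimensional F K] [CharP F p]
    (hpn : ¬ p ∣ Module.finrank F K) (hd0 : d ≠ 0) (hd : d ∣ Module.finrank F K) :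
    Nat.card {x : K | Algebra.trace F K x = 0 ∧ (minpoly F x).natDegree ∣ d} =
      Nat.card F ^ (d - 1) := by
  obtain ⟨E, hE, hmem⟩ := exists_subfield_mem_iff p d F K hd0 hd
  let T : E →ₗ[F] F := Algebra.trace F K ∘ₗ E.val.toLinearMap
  have hT : T ≠ 0 := by
    intro h
    have h1 : T 1 = 0 := by simp [h]
    have h2 : T 1 = (Module.finrank F K : F) := by
      simpa [T] using Algebra.trace_algebraMap (S := K) (1 : F)
    rw [h2, CharP.cast_eq_zero_iff F p] at h1
    exact hpn h1
  have hker : Module.finrank F (LinearMap.ker T) = d - 1 := by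
    have h := T.finrank_range_add_finrank_ker
    rw [LinearMap.range_eq_top.2 (LinearMap.surjective hT), finrank_top, Module.finrank_self,
      hE] at h
    omega
  rw [← hker, ← Module.natCard_eq_pow_finrank (K := F)]
  refine Nat.card_congr
    { toFun := fun x => ⟨⟨x.1, (hmem _).2 x.2.2⟩, x.2.1⟩
      invFun := fun y => ⟨y.1.1, y.2, (hmem _).1 y.1.2⟩
      left_inv := fun _ => rfl
      right_inv := fun _ => rfl }

/-- Let `p` be a prime, `q` a power of `p`, and `n > 0` with `p ∤ n`.
For every divisor `m` of `n`, the number of `x ∈ 𝔽_{q^n}` with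
`Tr_{𝔽_{q^n}/𝔽_q}(x) = 0` and `[𝔽_q(x) : 𝔽_q] = m` equals
`∑_{d ∣ m} μ(m/d) q^{d-1}`. -/
theorem statement17 (p q n m : ℕ) (hp : p.Prime)
    (hq : ∃ k : ℕ, 0 < k ∧ q = p ^ k)
    (hn : 0 < n) (hpn : ¬ p ∣ n) (hm : m ∣ n)
    (F K : Type*) [Field F] [Field K] [Algebra F K]
    [Fintype F] [Fintype K] [FiniteDimensional F K] [CharP F p]
    (hcard : Fintype.card F = q) (hrank : Module.finrank F K = n) :
    (Nat.card {x : K | Algebra.trace F K x = 0 ∧ (minpoly F x).natDegree = m} : ℤ) =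
      ∑ d ∈ m.divisors, ArithmeticFunction.moebius (m / d) * (q : ℤ) ^ (d - 1) := by
  classical
  have : Fact p.Prime := ⟨hp⟩
  subst hrank hcard
  have key := (ArithmeticFunction.sum_eq_iff_sum_mul_moebius_eq_on (R := ℤ)
    (f := fun e => (Nat.card {x : K | Algebra.trace F K x = 0 ∧ (minpoly F x).natDegree = e} : ℤ))
    (g := fun d => (Fintype.card F : ℤ) ^ (d - 1))
    {d | d ∣ Module.finrank F K} (fun a b hab hb => hab.trans hb)).1 ?_ m
      (Nat.pos_of_dvd_of_pos hm hn) hm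
  · simp only [Int.cast_id] at key
    rw [← key, Nat.sum_divisorsAntidiagonal'
      (fun a d => (ArithmeticFunction.moebius a : ℤ) * (Fintype.card F : ℤ) ^ (d - 1))]
  · intro d hd0 hd
    have h := card_trace_zero_natDegree_dvd p d F K hpn hd0.ne' hd
    simp only [← Nat.card_eq_fintype_card]
    rw [← Nat.cast_pow, ← h, ← Nat.cast_sum]
    congr 1
    simp only [Set.coe_ofPred, Nat.card_eq_fintype_card, Fintype.card_subtype]
    rw [Finset.card_eq_sum_card_fiberwise (f := fun x => (minpoly F x).natDegree)
      (t := d.divisors) (fun x hx => by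
        simp only [Finset.coe_filter, Finset.mem_univ, true_and, Set.mem_ofPred_eq] at hx
        simpa using ⟨hx.2, hd0.ne'⟩)]
    refine Finset.sum_congr rfl fun e he => ?_
    have hed := Nat.dvd_of_mem_divisors he
    congr 1
    ext x
    simp only [Finset.mem_filter, Finset.mem_univ, true_and]
    constructor
    · rintro ⟨h1, rfl⟩
      exact ⟨⟨h1, hed⟩, rfl⟩
    · rintro ⟨⟨h1, -⟩, h2⟩
      exact ⟨h1, h2⟩
end

section
/- Let F be a nonarchimedean local field and F ⊆ M ⊆ E a tower of finite unramified extensions. Then the norm map N_{E/M} restricts to a surjective group homomorphism from {x ∈ E^× : N_{E/F}(x) = 1} onto {y ∈ M^× : N_{M/F}(y) = 1}, and its kernel is {x ∈ E^× : N_{E/M}(x) = 1}; that is, the sequence 1 → ker(N_{E/M}) → ker(N_{E/F}) → ker(N_{M/F}) → 1, with the middle map given by N_{E/M}, is exact. -/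
open scoped BigOperators

/-!
The delicate point is surjectivity. Completeness and finiteness of the residue field are known only
for `E`; that `E / M` is Galois, that automorphisms and norms are compatible with the valuation, and
that units of `M` are norms all have to be derived.

*Compatibility with the valuation.* A unit of the valuation ring of `E` is, up to torsion, a
principal unit, and by Hensel lifting a principal unit has roots of unboundedly large order. Hence
every homomorphism from the unit group of `E` to `ℤ` is trivial on units of the valuation ring
(`hom_eq_one`). So a multiplicative map `ψ` on `E` with `ψ π = π ^ n` satisfies
`ord (ψ x) = n * ord x` (`ord_map`). This applies to automorphisms of `E` over a subfield containing
`π` and to norms down to such a subfield.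

*`E / M` is Galois.* The field generated over `M` by the Teichmüller lifts, the roots of `X ^ q - X`,
is dense in `E`. A dense subfield containing `π` over which `E` is finite equals `E`
(`surjective_of_dense`). Therefore `E` is a splitting field of the separable polynomial `X ^ q - X`
over `M` (`isGalois`), and its Galois group acts faithfully on the residue field (`faithful`).

*Units are norms.* Trace and norm are onto for extensions of finite fields, so the equation
`N x = y` with `y` of order zero can be solved modulo `π` and then by successive approximation
(`exists_norm_eq`).

If `N_{M/F} y = 1` then `N_{E/F} y = 1`, which forces `ord y = 0`, so `y = N_{E/M} x` for some `x`,
and transitivity of the norm gives `N_{E/F} x = 1`.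
-/

/-! ### Complete discretely valued fields -/

/-- A complete discretely valued field with finite residue field: the additive valuation `ord`,
a uniformizer `π`, sequential completeness, and finitely many residue classes. -/
structure CompleteDVF (E : Type*) [Field E] where
  ord : E → WithTop ℤ
  ord_mul : ∀ a b : E, ord (a * b) = ord a + ord b
  ord_add : ∀ a b : E, min (ord a) (ord b) ≤ ord (a + b)
  ord_top : ∀ a : E, ord a = ⊤ ↔ a = 0
  π : E
  ord_π : ord π = 1
  complete : ∀ a : ℕ → E,
      (∀ m : ℤ, ∃ N : ℕ, ∀ i, N ≤ i → ∀ j, N ≤ j → (m : WithTop ℤ) ≤ ord (a i - a j)) →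
      ∃ l : E, ∀ m : ℤ, ∃ N : ℕ, ∀ i, N ≤ i → (m : WithTop ℤ) ≤ ord (a i - l)
  res : ∃ S : Finset E, ∀ a : E, (0 : WithTop ℤ) ≤ ord a →
      ∃ b ∈ S, (0 : WithTop ℤ) < ord (a - b)

namespace CompleteDVF

variable {E : Type*} [Field E] (D : CompleteDVF E)

theorem ord_ne_top {x : E} (hx : x ≠ 0) : D.ord x ≠ ⊤ := fun h => hx ((D.ord_top x).1 h)

theorem ord_one : D.ord 1 = 0 := by
  have h := D.ord_mul 1 1
  have h1 := D.ord_ne_top (one_ne_zero (α := E))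
  rw [mul_one] at h
  lift D.ord 1 to ℤ using h1 with n
  norm_cast at h ⊢
  omega

/-- `ord` as a bundled additive valuation. -/
noncomputable def v : AddValuation E (WithTop ℤ) :=
  AddValuation.of D.ord ((D.ord_top 0).2 rfl) D.ord_one D.ord_add D.ord_mul

theorem v_apply (x : E) : D.v x = D.ord x := rfl

theorem ord_inv (x : E) : D.ord x⁻¹ = -D.ord x := D.v.map_inv

theorem ord_zero : D.ord 0 = ⊤ := D.v.map_zero

theorem ord_neg (x : E) : D.ord (-x) = D.ord x := D.v.map_neg x

theorem ord_pow (x : E) (n : ℕ) : D.ord (x ^ n) = n • D.ord x := D.v.map_pow x n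

theorem π_ne_zero : D.π ≠ 0 := by
  intro h
  have := D.ord_π
  rw [h, D.ord_zero] at this
  exact absurd this (by decide)

theorem ord_π_pow (n : ℕ) : D.ord (D.π ^ n) = ((n : ℤ) : WithTop ℤ) := by
  rw [D.ord_pow, D.ord_π]; simp

theorem ord_π_zpow (n : ℤ) : D.ord (D.π ^ n) = (n : WithTop ℤ) := by
  obtain ⟨m, rfl | rfl⟩ := n.eq_nat_or_neg
  · rw [zpow_natCast, D.ord_π_pow]
  · rw [zpow_neg, zpow_natCast, D.ord_inv, D.ord_π_pow]; rfl

/-- The valuation ring `{x : 0 ≤ ord x}`. -/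
def A : ValuationSubring E where
  carrier := {x | 0 ≤ D.ord x}
  mul_mem' {a b} ha hb := by
    simp only [Set.mem_ofPred_eq] at *
    rw [D.ord_mul]; exact add_nonneg ha hb
  one_mem' := by simp [D.ord_one]
  add_mem' {a b} ha hb := le_trans (le_min ha hb) (D.ord_add a b)
  zero_mem' := by simp [D.ord_zero]
  neg_mem' {a} ha := by simpa [D.ord_neg] using ha
  mem_or_inv_mem' x := by
    by_cases hx : x = 0
    · left; simp [hx, D.ord_zero]
    · simp only [Set.mem_ofPred_eq, D.ord_inv]
      have := D.ord_ne_top hx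
      lift D.ord x to ℤ using this with n
      rcases le_total 0 n with h | h
      · left; exact_mod_cast h
      · right
        have : (0 : ℤ) ≤ -n := by omega
        exact_mod_cast this

theorem mem_A {x : E} : x ∈ D.A ↔ 0 ≤ D.ord x := Iff.rfl

/-- The uniformizer as an element of the valuation ring. -/
def t : D.A := ⟨D.π, by rw [mem_A, D.ord_π]; exact zero_le_one⟩

@[simp] theorem coe_t : (D.t : E) = D.π := rfl

theorem t_ne_zero : D.t ≠ 0 := fun h => D.π_ne_zero (congrArg Subtype.val h)

theorem t_pow_dvd {n : ℕ} {a : D.A} : D.t ^ n ∣ a ↔ ((n : ℤ) : WithTop ℤ) ≤ D.ord a := by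
  constructor
  · rintro ⟨b, rfl⟩
    push_cast
    rw [D.ord_mul, coe_t, D.ord_π_pow]
    exact le_add_of_nonneg_right b.2
  · intro h
    refine ⟨⟨D.π ^ (-(n : ℤ)) * a, ?_⟩, ?_⟩
    · rw [mem_A, D.ord_mul, D.ord_π_zpow]
      by_cases ha : (a : E) = 0
      · simp [ha, D.ord_zero]
      · have := D.ord_ne_top ha
        lift D.ord a to ℤ using this with k
        norm_cast at *
        omega
    · apply Subtype.ext
      push_cast
      have := D.π_ne_zero
      rw [coe_t, zpow_neg, zpow_natCast, mul_inv_cancel_left₀ (pow_ne_zero _ this)]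

theorem t_dvd {a : D.A} : D.t ∣ a ↔ 0 < D.ord a := by
  have := D.t_pow_dvd (n := 1) (a := a)
  rw [pow_one] at this
  rw [this]
  by_cases ha : (a : E) = 0
  · simp [ha, D.ord_zero]
  · have := D.ord_ne_top ha
    lift D.ord a to ℤ using this with k
    norm_cast

theorem isUnit_iff {a : D.A} : IsUnit a ↔ D.ord a = 0 := by
  constructor
  · rintro ⟨u, rfl⟩
    have h : D.ord (((u : D.A) : E) * ((u⁻¹ : D.Aˣ) : D.A)) = 0 := by
      rw [← D.ord_one]; congr 1
      exact_mod_cast congrArg Subtype.val (u.mul_inv)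
    rw [D.ord_mul] at h
    have h1 : 0 ≤ D.ord ((u : D.A) : E) := (u : D.A).2
    have h2 : 0 ≤ D.ord (((u⁻¹ : D.Aˣ) : D.A) : E) := ((u⁻¹ : D.Aˣ) : D.A).2
    exact ((add_eq_zero_iff_of_nonneg h1 h2).1 h).1
  · intro h
    have ha : (a : E) ≠ 0 := by
      intro h0; rw [h0, D.ord_zero] at h; exact absurd h (by decide)
    refine IsUnit.of_mul_eq_one ⟨(a : E)⁻¹, ?_⟩ ?_
    · rw [mem_A, D.ord_inv, h]; decide
    · exact Subtype.ext (mul_inv_cancel₀ ha)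

theorem isUnit_iff_not_dvd {a : D.A} : IsUnit a ↔ ¬ D.t ∣ a := by
  rw [t_dvd, isUnit_iff, not_lt]
  exact ⟨fun h => h.le, fun h => le_antisymm h a.2⟩

theorem mem_maximalIdeal {a : D.A} : a ∈ IsLocalRing.maximalIdeal D.A ↔ D.t ∣ a := by
  rw [IsLocalRing.mem_maximalIdeal, mem_nonunits_iff, isUnit_iff_not_dvd, not_not]

theorem residue_eq_iff {a b : D.A} :
    IsLocalRing.residue D.A a = IsLocalRing.residue D.A b ↔ D.t ∣ a - b := by
  rw [← D.mem_maximalIdeal, ← sub_eq_zero, ← map_sub]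
  exact Ideal.Quotient.eq_zero_iff_mem

theorem eq_zero_of_forall_dvd {a : D.A} (h : ∀ n : ℕ, D.t ^ n ∣ a) : a = 0 := by
  by_contra ha
  have ha' : (a : E) ≠ 0 := fun h => ha (Subtype.ext h)
  simp only [t_pow_dvd] at h
  have := D.ord_ne_top ha'
  lift D.ord a to ℤ using this with k
  have h1 := h (k.toNat + 1)
  norm_cast at h1
  omega

theorem exists_limit (f : ℕ → D.A) (hf : ∀ n, D.t ^ n ∣ f (n + 1) - f n) :
    ∃ L : D.A, ∀ n, D.t ^ n ∣ f n - L := by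
  have h1 : ∀ n k, D.t ^ n ∣ f (n + k) - f n := by
    intro n k
    induction k with
    | zero => simp
    | succ k ih =>
      have : D.t ^ n ∣ f (n + k + 1) - f (n + k) :=
        (pow_dvd_pow _ (Nat.le_add_right n k)).trans (hf (n + k))
      simpa [add_assoc] using dvd_add this ih
  have h2 : ∀ n i, n ≤ i → ∀ j, n ≤ j → D.t ^ n ∣ f i - f j := by
    intro n i hi j hj
    obtain ⟨a, rfl⟩ := Nat.exists_eq_add_of_le hi
    obtain ⟨b, rfl⟩ := Nat.exists_eq_add_of_le hj
    simpa using dvd_sub (h1 n a) (h1 n b)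
  obtain ⟨l, hl⟩ := D.complete (fun n => (f n : E)) (by
    intro m
    refine ⟨m.toNat, fun i hi j hj => ?_⟩
    have := D.t_pow_dvd.1 (h2 m.toNat i hi j hj)
    refine le_trans ?_ this
    exact_mod_cast Int.self_le_toNat m)
  have hlA : l ∈ D.A := by
    obtain ⟨N, hN⟩ := hl 0
    have h3 : (f N : E) - l ∈ D.A := hN N le_rfl
    simpa using D.A.sub_mem (f N).2 h3
  refine ⟨⟨l, hlA⟩, fun n => ?_⟩
  obtain ⟨N, hN⟩ := hl n
  have h4 : D.t ^ n ∣ f (n + N) - ⟨l, hlA⟩ := D.t_pow_dvd.2 (hN _ (Nat.le_add_left N n))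
  simpa using dvd_sub h4 (h1 n N)

theorem isAdicComplete : IsAdicComplete (Ideal.span {D.t}) D.A where
  haus' x hx := by
    refine D.eq_zero_of_forall_dvd fun n => ?_
    have := hx n
    rw [SModEq.zero] at this
    simpa [Ideal.span_singleton_pow, Ideal.mem_span_singleton] using this
  prec' f hf := by
    obtain ⟨L, hL⟩ := D.exists_limit f (fun n => by
      have := hf (Nat.le_succ n)
      rw [SModEq.comm, SModEq.sub_mem] at this
      simpa [Ideal.span_singleton_pow, Ideal.mem_span_singleton] using this)
    refine ⟨L, fun n => ?_⟩
    rw [SModEq.sub_mem]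
    simpa [Ideal.span_singleton_pow, Ideal.mem_span_singleton] using hL n

theorem hensel (f : Polynomial D.A) (hf : f.Monic) (a : D.A) (h : D.t ∣ f.eval a)
    (h' : IsUnit (f.derivative.eval a)) : ∃ b, f.eval b = 0 ∧ D.t ∣ b - a := by
  have := D.isAdicComplete
  obtain ⟨b, hb, hb'⟩ := HenselianRing.is_henselian (I := Ideal.span {D.t}) f hf a
    (Ideal.mem_span_singleton.2 h) (h'.map _)
  exact ⟨b, hb, Ideal.mem_span_singleton.1 hb'⟩

/-- The residue field. -/
abbrev k : Type _ := IsLocalRing.ResidueField D.A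

instance finite_k : Finite D.k := by
  classical
  obtain ⟨S, hS⟩ := D.res
  have hb : ∀ x : D.k, ∃ b : S, ∀ c : D.A, IsLocalRing.residue D.A c = x →
      0 < D.ord (c - b) := by
    intro x
    obtain ⟨a, rfl⟩ := IsLocalRing.residue_surjective x
    obtain ⟨b, hb, hb'⟩ := hS a a.2
    refine ⟨⟨b, hb⟩, fun c hc => ?_⟩
    have h1 : 0 < D.ord (c - a) := D.t_dvd.1 (D.residue_eq_iff.1 hc)
    have := D.ord_add (c - a) (a - b)
    rw [sub_add_sub_cancel] at this
    exact lt_of_lt_of_le (lt_min h1 hb') this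
  choose g hg using hb
  refine Finite.of_injective g fun x y hxy => ?_
  obtain ⟨a, rfl⟩ := IsLocalRing.residue_surjective x
  obtain ⟨b, rfl⟩ := IsLocalRing.residue_surjective y
  rw [D.residue_eq_iff, D.t_dvd]
  have h1 := hg _ a rfl
  have h2 := hg _ b rfl
  rw [hxy] at h1
  rw [← D.ord_neg] at h2
  have := lt_of_lt_of_le (lt_min h1 h2) (D.ord_add _ _)
  simpa using this

/-! ### Multiplicative maps and the valuation; Teichmüller lifts -/

/-- The cardinality of the residue field. -/
noncomputable def q : ℕ := Nat.card D.k

theorem one_lt_q : 1 < D.q := Finite.one_lt_card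

theorem cast_q : (D.q : D.k) = 0 := by
  have := Fintype.ofFinite D.k
  rw [q, Nat.card_eq_fintype_card]
  exact FiniteField.cast_card_eq_zero D.k

theorem pow_q (x : D.k) : x ^ D.q = x := by
  have := Fintype.ofFinite D.k
  rw [q, Nat.card_eq_fintype_card]
  exact FiniteField.pow_card x

theorem residue_eq_zero_iff {a : D.A} : IsLocalRing.residue D.A a = 0 ↔ D.t ∣ a := by
  rw [← map_zero (IsLocalRing.residue D.A), D.residue_eq_iff, sub_zero]

theorem isUnit_iff_residue {a : D.A} : IsUnit a ↔ IsLocalRing.residue D.A a ≠ 0 := by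
  rw [isUnit_iff_not_dvd, Ne, residue_eq_zero_iff]

/-- Principal units have roots of every order `q ^ (j + 1) - 1`, by Hensel lifting: these
exponents are prime to the residue characteristic. -/
theorem exists_root (a : D.A) (ha : D.t ∣ a - 1) (j : ℕ) :
    ∃ w : D.A, w ^ (D.q ^ (j + 1) - 1) = a := by
  have hq := D.one_lt_q
  have hn : D.q ^ (j + 1) - 1 ≠ 0 := by
    have := Nat.one_lt_pow (Nat.add_one_ne_zero j) hq
    omega
  have hn' : ((D.q ^ (j + 1) - 1 : ℕ) : D.k) = -1 := by
    rw [Nat.cast_sub (Nat.one_le_pow _ _ (by omega))]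
    simp [D.cast_q]
  obtain ⟨b, hb, -⟩ := D.hensel (Polynomial.X ^ (D.q ^ (j + 1) - 1) - Polynomial.C a)
    (Polynomial.monic_X_pow_sub_C a hn) 1
    (by simpa using (dvd_neg.2 ha)) (by
      rw [isUnit_iff_residue]
      simp [Polynomial.derivative_X_pow, hn'])
  exact ⟨b, by simpa [sub_eq_zero] using hb⟩

/-- A homomorphism from the multiplicative group to `ℤ` is trivial on the units of the valuation
ring, because such units are torsion modulo the principal units, and the image of a principal unit is
divisible by all the integers `q ^ (j + 1) - 1`. -/
theorem hom_eq_one (φ : Eˣ →* Multiplicative ℤ) (u : Eˣ) (hu : D.ord u = 0) : φ u = 1 := by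
  have hq := D.one_lt_q
  have key : ∀ w : Eˣ, (hw : 0 < D.ord ((w : E) - 1)) → (φ w).toAdd = 0 := by
    intro w hw
    have hwA : (w : E) ∈ D.A := by
      have : (w : E) - 1 ∈ D.A := hw.le
      simpa using add_mem this D.A.one_mem
    have hd : ∀ j : ℕ, ((D.q ^ (j + 1) - 1 : ℕ) : ℤ) ∣ (φ w).toAdd := by
      intro j
      obtain ⟨r, hr⟩ := D.exists_root ⟨w, hwA⟩ (D.t_dvd.2 hw) j
      have hr' : (r : E) ^ (D.q ^ (j + 1) - 1) = w := congrArg Subtype.val hr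
      have hr0 : (r : E) ≠ 0 := by
        rintro h0
        rw [h0, zero_pow] at hr'
        · exact w.ne_zero hr'.symm
        · have := Nat.one_lt_pow (Nat.add_one_ne_zero j) hq
          omega
      have : (Units.mk0 (r : E) hr0) ^ (D.q ^ (j + 1) - 1) = w := Units.ext (by simpa using hr')
      rw [← this, map_pow, toAdd_pow]
      exact ⟨_, nsmul_eq_mul _ _⟩
    have hj := hd (φ w).toAdd.natAbs
    refine Int.eq_zero_of_abs_lt_dvd hj ?_
    have := Nat.lt_pow_self hq (n := (φ w).toAdd.natAbs + 1)
    rw [Int.abs_eq_natAbs]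
    norm_cast
    omega
  have huA : (u : E) ∈ D.A := by rw [D.mem_A, hu]
  have h1 : D.t ∣ (⟨u, huA⟩ : D.A) ^ (D.q - 1) - 1 := by
    rw [← residue_eq_iff, map_pow, map_one]
    have h0 : IsLocalRing.residue D.A ⟨u, huA⟩ ≠ 0 := D.isUnit_iff_residue.1 (D.isUnit_iff.2 hu)
    apply mul_left_cancel₀ h0
    rw [mul_one, ← pow_succ', Nat.sub_add_cancel hq.le, D.pow_q]
  have h2 := key (u ^ (D.q - 1)) (by simpa using D.t_dvd.1 h1)
  rw [map_pow, toAdd_pow, smul_eq_zero] at h2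
  rcases h2 with h2 | h2
  · omega
  · exact h2

/-- `ord` as a homomorphism on units. -/
noncomputable def ordU : Eˣ →* Multiplicative ℤ where
  toFun u := Multiplicative.ofAdd ((D.ord u).untop (D.ord_ne_top u.ne_zero))
  map_one' := by simp [D.ord_one]
  map_mul' a b := by
    rw [← ofAdd_add]
    congr 1
    apply WithTop.coe_injective
    simp [D.ord_mul]

theorem coe_ordU (u : Eˣ) : ((D.ordU u).toAdd : WithTop ℤ) = D.ord u := by
  simp [ordU]

theorem exists_eq_π_zpow_mul {x : E} (hx : x ≠ 0) :
    ∃ (m : ℤ) (u : E), D.ord x = m ∧ D.ord u = 0 ∧ x = D.π ^ m * u := by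
  obtain ⟨m, hm⟩ := WithTop.ne_top_iff_exists.1 (D.ord_ne_top hx)
  refine ⟨m, D.π ^ (-m) * x, hm.symm, ?_, ?_⟩
  · rw [D.ord_mul, D.ord_π_zpow, ← hm]
    norm_cast
    omega
  · rw [← mul_assoc, ← zpow_add₀ D.π_ne_zero]; simp

/-- Any multiplicative map `ψ : E → E` with `ψ π = π ^ n` multiplies `ord` by `n`.  No continuity
of `ψ` is assumed. -/
theorem ord_map (ψ : E →* E) (n : ℕ) (hψ : ψ D.π = D.π ^ n) {x : E} (hx : x ≠ 0) :
    D.ord (ψ x) = n • D.ord x := by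
  have h0 : ∀ u : E, D.ord u = 0 → D.ord (ψ u) = 0 := by
    intro u hu
    have hu0 : u ≠ 0 := by
      intro h0; rw [h0, D.ord_zero] at hu; exact absurd hu (by decide)
    have := D.hom_eq_one (D.ordU.comp (Units.map ψ)) (Units.mk0 u hu0) hu
    have h2 := D.coe_ordU (Units.map ψ (Units.mk0 u hu0))
    rw [MonoidHom.comp_apply] at this
    rw [this] at h2
    simpa using h2.symm
  obtain ⟨m, u, hm, hu, rfl⟩ := D.exists_eq_π_zpow_mul hx
  rw [map_mul, D.ord_mul, h0 u hu, D.ord_mul, hu, add_zero, add_zero]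
  have h3 : ψ (D.π ^ m) = (D.π ^ m) ^ n := by
    have : Units.map ψ (Units.mk0 D.π D.π_ne_zero ^ m) = (Units.mk0 D.π D.π_ne_zero ^ m) ^ n := by
      rw [map_zpow, ← zpow_natCast, ← zpow_mul, mul_comm, zpow_mul, zpow_natCast]
      congr 1
      exact Units.ext (by simpa using hψ)
    simpa only [Units.coe_map, Units.val_zpow_eq_zpow_val, Units.val_pow_eq_pow_val,
      Units.val_mk0] using! congrArg Units.val this
  rw [h3, D.ord_pow]

/-- The Teichmüller lift: a root of `X ^ q - X` in a given residue class. -/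
theorem exists_teich (x : D.k) : ∃ r : D.A, r ^ D.q = r ∧ IsLocalRing.residue D.A r = x := by
  obtain ⟨a, rfl⟩ := IsLocalRing.residue_surjective x
  have hq := D.one_lt_q
  obtain ⟨b, hb, hb'⟩ := D.hensel (Polynomial.X ^ D.q - Polynomial.X)
    (Polynomial.monic_X_pow_sub (by rw [Polynomial.degree_X]; exact_mod_cast hq)) a
    (by rw [← residue_eq_zero_iff]; simp [D.pow_q])
    (by
      rw [isUnit_iff_residue]
      simp [Polynomial.derivative_X_pow, D.cast_q])
  exact ⟨b, by simpa [sub_eq_zero] using hb, D.residue_eq_iff.2 hb'⟩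

/-- Teichmüller lifts are determined by their residue class. -/
theorem teich_unique {r s : D.A} (hr : r ^ D.q = r) (hs : s ^ D.q = s)
    (h : IsLocalRing.residue D.A r = IsLocalRing.residue D.A s) : r = s := by
  have h1 := (Commute.all r s).geom_sum₂_mul D.q
  rw [hr, hs] at h1
  have hu : IsUnit ((∑ i ∈ Finset.range D.q, r ^ i * s ^ (D.q - 1 - i)) - 1) := by
    rw [isUnit_iff_residue]
    have : ∑ i ∈ Finset.range D.q, IsLocalRing.residue D.A s ^ i *
        IsLocalRing.residue D.A s ^ (D.q - 1 - i) = 0 := by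
      rw [Finset.sum_congr rfl (g := fun _ => IsLocalRing.residue D.A s ^ (D.q - 1))]
      · simp [D.cast_q]
      · intro i hi
        rw [← pow_add]
        congr 1
        have := Finset.mem_range.1 hi
        omega
    simp [h, this]
  have h2 : ((∑ i ∈ Finset.range D.q, r ^ i * s ^ (D.q - 1 - i)) - 1) * (r - s) = 0 := by
    rw [sub_mul, h1]; ring
  rw [hu.mul_right_eq_zero] at h2
  exact sub_eq_zero.1 h2

/-! ### Dense subfields over which `E` is finite -/

theorem exists_teich_dvd (x : D.A) : ∃ r y : D.A, r ^ D.q = r ∧ x = r + D.t * y := by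
  obtain ⟨r, hr, hrx⟩ := D.exists_teich (IsLocalRing.residue D.A x)
  obtain ⟨y, hy⟩ := D.residue_eq_iff.1 hrx.symm
  exact ⟨r, y, hr, by rw [← hy]; ring⟩

theorem exists_π_pow_mul_mem (x : E) : ∃ N : ℕ, D.π ^ N * x ∈ D.A := by
  by_cases hx : x = 0
  · exact ⟨0, by simp [hx]⟩
  obtain ⟨m, hm⟩ := WithTop.ne_top_iff_exists.1 (D.ord_ne_top hx)
  refine ⟨m.natAbs, ?_⟩
  rw [mem_A, D.ord_mul, D.ord_π_pow, ← hm]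
  have : (0 : ℤ) ≤ (m.natAbs : ℤ) + m := by omega
  exact_mod_cast this

section Dense

variable {K : Type*} [Field K] [Algebra K E]

/-- A subfield containing the uniformizer and the Teichmüller lifts is dense. -/
theorem dense_of_teich (p : K) (hp : algebraMap K E p = D.π)
    (hT : ∀ r : D.A, r ^ D.q = r → ∃ β : K, algebraMap K E β = r) (x : E) (m : ℕ) :
    ∃ β : K, ((m : ℤ) : WithTop ℤ) ≤ D.ord (x - algebraMap K E β) := by
  have h1 : ∀ (n : ℕ) (x : D.A), ∃ (β : K) (y : D.A), (x : E) = algebraMap K E β + D.π ^ n * y := by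
    intro n x
    induction n with
    | zero => exact ⟨0, x, by simp⟩
    | succ n ih =>
      obtain ⟨β, y, hy⟩ := ih
      obtain ⟨r, z, hr, hz⟩ := D.exists_teich_dvd y
      obtain ⟨γ, hγ⟩ := hT r hr
      refine ⟨β + p ^ n * γ, z, ?_⟩
      rw [hy, hz]
      rw [map_add, map_mul, map_pow, hp, hγ]
      simp only [AddMemClass.coe_add, MulMemClass.coe_mul, coe_t]
      ring
  obtain ⟨N, hN⟩ := D.exists_π_pow_mul_mem x
  obtain ⟨β, y, hy⟩ := h1 (N + m) ⟨_, hN⟩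
  refine ⟨β / p ^ N, ?_⟩
  have hπ := D.π_ne_zero
  have : x - algebraMap K E (β / p ^ N) = D.π ^ m * y := by
    rw [map_div₀, map_pow, hp]
    have hy' : D.π ^ N * x = algebraMap K E β + D.π ^ (N + m) * y := hy
    field_simp
    linear_combination hy'
  rw [this, D.ord_mul, D.ord_π_pow]
  exact le_add_of_nonneg_right y.2

/-- A polynomial is bounded on the valuation ring. -/
theorem exists_bound (R : Polynomial E) :
    ∃ N : ℕ, ∀ y ∈ D.A, D.π ^ N * R.eval y ∈ D.A := by
  induction R using Polynomial.induction_on' with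
  | add P Q hP hQ =>
    obtain ⟨N, hN⟩ := hP
    obtain ⟨N', hN'⟩ := hQ
    refine ⟨N + N', fun y hy => ?_⟩
    have : D.π ^ (N + N') * (P + Q).eval y =
        D.π ^ N' * (D.π ^ N * P.eval y) + D.π ^ N * (D.π ^ N' * Q.eval y) := by
      rw [Polynomial.eval_add]; ring
    rw [this]
    have hπ : D.π ∈ D.A := D.t.2
    exact add_mem (mul_mem (pow_mem hπ _) (hN y hy)) (mul_mem (pow_mem hπ _) (hN' y hy))
  | monomial n a =>
    obtain ⟨N, hN⟩ := D.exists_π_pow_mul_mem a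
    refine ⟨N, fun y hy => ?_⟩
    rw [Polynomial.eval_monomial, ← mul_assoc]
    exact mul_mem hN (pow_mem hy n)

variable [FiniteDimensional K E]

/-- The usual formula for the order of a norm, obtained from `ord_map` without completeness
of `K`. -/
theorem ord_norm (p : K) (hp : algebraMap K E p = D.π) {x : E} (hx : x ≠ 0) :
    D.ord (algebraMap K E (Algebra.norm K x)) = Module.finrank K E • D.ord x := by
  refine D.ord_map ((algebraMap K E : K →* E).comp (Algebra.norm K)) _ ?_ hx
  rw [← hp]
  simp [Algebra.norm_algebraMap]

/-- The norm of `γ` is, up to sign, a power of the constant coefficient of its minimal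
polynomial. -/
theorem ord_minpoly_coeff_zero (p : K) (hp : algebraMap K E p = D.π) {γ : E} (hγ : γ ≠ 0) :
    D.ord (algebraMap K E ((minpoly K γ).coeff 0)) = (minpoly K γ).natDegree • D.ord γ := by
  have hint : IsIntegral K γ := Algebra.IsIntegral.isIntegral γ
  have h1 := D.ord_norm p hp hγ
  have hgen := Algebra.PowerBasis.norm_gen_eq_coeff_zero_minpoly
    (IntermediateField.adjoin.powerBasis hint)
  rw [IntermediateField.adjoin.powerBasis_gen, IntermediateField.minpoly_gen] at hgen
  have hsign : ∀ (n : ℕ) (y : E), D.ord ((-1) ^ n * y) = D.ord y := by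
    intro n y
    rcases neg_one_pow_eq_or E n with h | h <;> simp [h, D.ord_neg]
  rw [Algebra.norm_eq_norm_adjoin, hgen, map_pow, D.ord_pow, map_mul, map_pow, map_neg, map_one,
    hsign, ← Module.finrank_mul_finrank K (IntermediateField.adjoin K {γ}) E,
    IntermediateField.adjoin.finrank hint] at h1
  have hr : 0 < Module.finrank (IntermediateField.adjoin K {γ}) E := Module.finrank_pos
  have hc : (minpoly K γ).coeff 0 ≠ 0 := minpoly.coeff_zero_ne_zero hint hγ
  have hc' : algebraMap K E ((minpoly K γ).coeff 0) ≠ 0 := by simpa using hc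
  obtain ⟨a, ha⟩ := WithTop.ne_top_iff_exists.1 (D.ord_ne_top hc')
  obtain ⟨b, hb⟩ := WithTop.ne_top_iff_exists.1 (D.ord_ne_top hγ)
  rw [← ha, ← hb] at h1 ⊢
  rw [← WithTop.coe_nsmul, ← WithTop.coe_nsmul, WithTop.coe_inj] at h1
  rw [← WithTop.coe_nsmul, WithTop.coe_inj]
  simp only [nsmul_eq_mul, Nat.cast_mul] at h1 ⊢
  have hr' : (Module.finrank (IntermediateField.adjoin K {γ}) E : ℤ) ≠ 0 := by positivity
  apply mul_left_cancel₀ hr'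
  rw [h1]; ring

/-- A separable element of `E` over a dense subfield `K` with `E / K` finite lies in `K`: for `β ∈ K`
close to `α`, the value `f β` of the minimal polynomial has order `deg f * ord (β - α)` by
`ord_minpoly_coeff_zero`, but order `ord (β - α) + ord c` by Taylor expansion,
where `c` is the nonzero derivative of `f` at `α`. -/
theorem mem_of_separable (p : K) (hp : algebraMap K E p = D.π)
    (hdense : ∀ (x : E) (m : ℕ), ∃ β : K, ((m : ℤ) : WithTop ℤ) ≤ D.ord (x - algebraMap K E β))
    (α : E) (hα : IsSeparable K α) : α ∈ (algebraMap K E).range := by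
  have hint : IsIntegral K α := Algebra.IsIntegral.isIntegral α
  set f := (minpoly K α).map (algebraMap K E) with hf
  set g := Polynomial.taylor α f with hg
  have hg0 : g.coeff 0 = 0 := by
    rw [hg, Polynomial.taylor_coeff_zero, hf, Polynomial.eval_map_algebraMap, minpoly.aeval]
  set c := g.coeff 1 with hc
  have hc0 : c ≠ 0 := by
    rw [hc, hg, Polynomial.taylor_coeff_one, hf, Polynomial.derivative_map,
      Polynomial.eval_map_algebraMap]
    exact hα.aeval_derivative_ne_zero (minpoly.aeval K α)
  have hgR : ∀ y, g.eval y = y * (c + y * g.divX.divX.eval y) := by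
    intro y
    conv_lhs => rw [← Polynomial.divX_mul_X_add g, ← Polynomial.divX_mul_X_add g.divX]
    simp only [hg0, Polynomial.coeff_divX, Polynomial.eval_add, Polynomial.eval_mul,
      Polynomial.eval_X, Polynomial.eval_C, zero_add, ← hc]
    ring
  obtain ⟨N, hN⟩ := D.exists_bound g.divX.divX
  obtain ⟨a, ha⟩ := WithTop.ne_top_iff_exists.1 (D.ord_ne_top hc0)
  obtain ⟨β, hβ⟩ := hdense α (N + a.natAbs + 1)
  by_cases hγ : α - algebraMap K E β = 0
  · exact ⟨β, (sub_eq_zero.1 hγ).symm⟩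
  set γ := α - algebraMap K E β with hγdef
  have h1 := D.ord_minpoly_coeff_zero p hp hγ
  obtain ⟨b, hb⟩ := WithTop.ne_top_iff_exists.1 (D.ord_ne_top hγ)
  have hbN : (N : ℤ) + a.natAbs + 1 ≤ b := by
    rw [← hb] at hβ; exact_mod_cast hβ
  have hval : algebraMap K E ((minpoly K γ).coeff 0) = g.eval (-γ) := by
    rw [hγdef, minpoly.sub_algebraMap, hg, Polynomial.taylor_eval, Polynomial.coeff_zero_eq_eval_zero]
    simp [hf, Polynomial.eval_map_algebraMap, Polynomial.aeval_algebraMap_apply]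
  have hdeg : (minpoly K γ).natDegree = (minpoly K α).natDegree := by
    rw [hγdef, minpoly.sub_algebraMap, Polynomial.natDegree_comp, Polynomial.natDegree_X_add_C,
      mul_one]
  have hγA : -γ ∈ D.A := by
    rw [mem_A, D.ord_neg, ← hb]
    have : (0 : ℤ) ≤ b := by omega
    exact_mod_cast this
  have hsmall : D.ord c < D.ord (-γ * g.divX.divX.eval (-γ)) := by
    have h2 := hN _ hγA
    rw [mem_A, D.ord_mul, D.ord_π_pow] at h2
    rw [D.ord_mul, D.ord_neg, ← ha, ← hb]
    by_cases htop : D.ord (g.divX.divX.eval (-γ)) = ⊤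
    · rw [htop, WithTop.add_top]; exact WithTop.coe_lt_top _
    · obtain ⟨e, he⟩ := WithTop.ne_top_iff_exists.1 htop
      rw [← he] at h2 ⊢
      have h3 : 0 ≤ (N : ℤ) + e := by exact_mod_cast h2
      have : a < b + e := by omega
      exact_mod_cast this
  have hsum : D.ord (c + -γ * g.divX.divX.eval (-γ)) = a :=
    (D.v.map_add_eq_of_lt_left hsmall).trans ha.symm
  rw [hval, hgR, D.ord_mul, hsum, D.ord_neg, ← hb, hdeg, ← WithTop.coe_nsmul, ← WithTop.coe_add,
    WithTop.coe_inj, nsmul_eq_mul] at h1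
  apply minpoly.natDegree_eq_one_iff.1
  have hd := minpoly.natDegree_pos hint
  by_contra hne
  have h2 : (2 : ℤ) ≤ (minpoly K α).natDegree := by
    have : 2 ≤ (minpoly K α).natDegree := by omega
    exact_mod_cast this
  nlinarith [Int.natCast_natAbs a, le_abs_self a, abs_nonneg a]

end Dense

/-- In characteristic `p`, with `P = p ^ e`, the powers `1, t, …, t ^ (P - 1)` span the valuation
ring over its subring of `P`-th powers.  The hypotheses isolate what is used about `P`. -/
theorem exists_sum_pow (P : ℕ) (hP : P ≠ 0) (hadd : ∀ a b : D.A, (a + b) ^ P = a ^ P + b ^ P)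
    (hsurj : ∀ a : D.A, ∃ c y : D.A, a = c ^ P + D.t * y) (x : D.A) :
    ∃ w : ℕ → D.A, x = ∑ j ∈ Finset.range P, D.t ^ j * w j ^ P := by
  have hstep : ∀ (n : ℕ) (x : D.A), ∃ (c : ℕ → D.A) (y : D.A),
      x = ∑ j ∈ Finset.range n, D.t ^ j * c j ^ P + D.t ^ n * y := by
    intro n x
    induction n with
    | zero => exact ⟨0, x, by simp⟩
    | succ n ih =>
      obtain ⟨c, y, h⟩ := ih
      obtain ⟨d, z, hd⟩ := hsurj y
      refine ⟨Function.update c n d, z, ?_⟩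
      rw [Finset.sum_range_succ, Function.update_self, Finset.sum_congr rfl
        (g := fun j => D.t ^ j * c j ^ P), h, hd]
      · ring
      · intro j hj
        rw [Function.update_of_ne (Finset.mem_range.1 hj).ne]
  choose C Y hCY using hstep P
  let X : ℕ → D.A := fun n => Y^[n] x
  let W : ℕ → ℕ → D.A := fun n j => ∑ i ∈ Finset.range n, D.t ^ i * C (X i) j
  have hW : ∀ n, x = ∑ j ∈ Finset.range P, D.t ^ j * W n j ^ P + (D.t ^ n) ^ P * X n := by
    intro n
    induction n with
    | zero => simp [W, X, hP]
    | succ n ih =>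
      have hX : X (n + 1) = Y (X n) := Function.iterate_succ_apply' _ _ _
      have : ∀ j, W (n + 1) j ^ P = W n j ^ P + (D.t ^ n) ^ P * C (X n) j ^ P := by
        intro j
        simp only [W]
        rw [Finset.sum_range_succ, hadd, mul_pow]
      simp only [this, hX, mul_add, Finset.sum_add_distrib]
      conv_lhs => rw [ih, hCY (X n)]
      rw [mul_add, Finset.mul_sum, add_assoc]
      congr 1
      congr 1
      · exact Finset.sum_congr rfl fun j _ => by ring
      · ring
  have hlim : ∀ j, ∃ L : D.A, ∀ n, D.t ^ n ∣ W n j - L := by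
    intro j
    refine D.exists_limit _ fun n => ?_
    simp only [W]
    rw [Finset.sum_range_succ, add_sub_cancel_left]
    exact dvd_mul_right _ _
  choose w hw using hlim
  refine ⟨w, sub_eq_zero.1 (D.eq_zero_of_forall_dvd fun n => ?_)⟩
  conv => arg 2; arg 1; rw [hW n]
  rw [add_sub_right_comm, ← Finset.sum_sub_distrib]
  refine dvd_add (Finset.dvd_sum fun j _ => ?_) ?_
  · rw [← mul_sub]
    exact ((hw j n).trans (sub_dvd_pow_sub_pow _ _ P)).mul_left _
  · exact (dvd_pow_self _ hP).mul_right _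

/-- The residue field is perfect. -/
theorem exists_pow_add (p e : ℕ) [Fact p.Prime] [CharP E p] (a : D.A) :
    ∃ c y : D.A, a = c ^ p ^ e + D.t * y := by
  have : CharP D.k p := by
    refine (CharP.charP_iff_prime_eq_zero (Fact.out : p.Prime)).2 ?_
    have h : (p : D.A) = 0 := Subtype.ext (by simp)
    rw [← map_natCast (IsLocalRing.residue D.A), h, map_zero]
  have hinj : Function.Injective (fun x : D.k => x ^ p ^ e) := iterateFrobenius_inj D.k p e
  obtain ⟨z, hz⟩ := Finite.surjective_of_injective hinj (IsLocalRing.residue D.A a)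
  obtain ⟨c, rfl⟩ := IsLocalRing.residue_surjective z
  have hz' : IsLocalRing.residue D.A a = IsLocalRing.residue D.A (c ^ p ^ e) := by
    rw [map_pow]; exact hz.symm
  obtain ⟨y, hy⟩ := D.residue_eq_iff.1 hz'
  exact ⟨c, y, by rw [← hy]; ring⟩

section Dense

variable {K : Type*} [Field K] [Algebra K E] [FiniteDimensional K E]

/-- A dense subfield `K` containing the uniformizer, with `E / K` finite, is the whole field.  By
`mem_of_separable` the extension is purely inseparable, so in characteristic `c > 0` the field `K`
contains all `c ^ e`-th powers for some `e`, and by `exists_sum_pow` these together with the powers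
of the uniformizer generate `E`. -/
theorem surjective_of_dense (p : K) (hp : algebraMap K E p = D.π)
    (hdense : ∀ (x : E) (m : ℕ), ∃ β : K, ((m : ℤ) : WithTop ℤ) ≤ D.ord (x - algebraMap K E β))
    (x : E) : x ∈ (algebraMap K E).range := by
  have hsep : separableClosure K E = ⊥ := by
    refine bot_unique fun α hα => ?_
    obtain ⟨β, rfl⟩ := D.mem_of_separable p hp hdense α (mem_separableClosure_iff.1 hα)
    exact IntermediateField.algebraMap_mem _ β
  have hpi : IsPurelyInseparable K E := separableClosure.eq_bot_iff.1 hsep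
  have hexp := IsPurelyInseparable.exponent_def K (L := E)
  set e := IsPurelyInseparable.exponent K E
  rcases CharP.exists K with ⟨c, hc⟩
  have hce : ringExpChar K = max c 1 := by
    rw [ringExpChar, ringChar.eq K c]
  by_cases hc0 : c = 0
  · simpa [hce, hc0] using hexp x
  have hprime : c.Prime := (CharP.char_is_prime_or_zero K c).resolve_right hc0
  rw [hce, max_eq_left hprime.one_lt.le] at hexp
  have : Fact c.Prime := ⟨hprime⟩
  have : CharP E c := charP_of_injective_algebraMap (algebraMap K E).injective c
  have hA : ∀ x : D.A, (x : E) ∈ (algebraMap K E).range := by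
    intro x
    obtain ⟨w, hw⟩ := D.exists_sum_pow (c ^ e) (pow_ne_zero _ hc0)
      (fun a b => Subtype.ext (by push_cast; exact add_pow_char_pow (a : E) (b : E) c e))
      (D.exists_pow_add c e) x
    have hw' : (x : E) = ∑ j ∈ Finset.range (c ^ e), D.π ^ j * (w j : E) ^ c ^ e := by
      rw [hw]; push_cast; rfl
    rw [hw']
    exact sum_mem fun j _ => mul_mem (pow_mem (RingHom.mem_range.2 ⟨p, hp⟩) j) (hexp _)
  obtain ⟨N, hN⟩ := D.exists_π_pow_mul_mem x
  obtain ⟨β, hβ⟩ := hA ⟨_, hN⟩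
  refine ⟨β / p ^ N, ?_⟩
  have hπ := D.π_ne_zero
  rw [map_div₀, map_pow, hp, hβ]
  field_simp

end Dense

/-! ### The extension `E / M` is Galois -/

section Galois

variable {M : Type*} [Field M] [Algebra M E] [FiniteDimensional M E]

/-- `E` is generated over `M` by the Teichmüller lifts. -/
theorem adjoin_teich (p : M) (hp : algebraMap M E p = D.π) :
    IntermediateField.adjoin M {x : E | x ^ D.q = x} = ⊤ := by
  set K := IntermediateField.adjoin M {x : E | x ^ D.q = x}
  refine top_unique fun x _ => ?_
  have hpK : algebraMap K E (algebraMap M K p) = D.π := by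
    rw [← IsScalarTower.algebraMap_apply, hp]
  obtain ⟨β, rfl⟩ := D.surjective_of_dense (algebraMap M K p) hpK
    (D.dense_of_teich _ hpK fun r hr => ⟨⟨r, IntermediateField.subset_adjoin _ _
      (show (r : E) ^ D.q = r by exact_mod_cast congrArg Subtype.val hr)⟩, rfl⟩) x
  exact β.2

/-- `E` is the splitting field over `M` of `X ^ q - X`, which has `q` distinct roots. -/
theorem isGalois (p : M) (hp : algebraMap M E p = D.π) : IsGalois M E := by
  classical
  have hq := D.one_lt_q
  choose T hT hTres using D.exists_teich
  set f : Polynomial M := Polynomial.X ^ D.q - Polynomial.X with hf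
  have hfm : f.map (algebraMap M E) = Polynomial.X ^ D.q - Polynomial.X := by simp [hf]
  have hdeg : (f.map (algebraMap M E)).natDegree = D.q := by
    rw [hfm]; exact FiniteField.X_pow_card_sub_X_natDegree_eq E hq
  have hne : f.map (algebraMap M E) ≠ 0 := by
    intro h; rw [h, Polynomial.natDegree_zero] at hdeg; omega
  have hinj : Function.Injective (fun x : D.k => (T x : E)) := by
    intro x y hxy
    have : T x = T y := Subtype.ext hxy
    rw [← hTres x, this, hTres]
  have := Fintype.ofFinite D.k
  have hsub : Finset.univ.image (fun x : D.k => (T x : E)) ⊆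
      (f.map (algebraMap M E)).roots.toFinset := by
    intro y hy
    obtain ⟨x, -, rfl⟩ := Finset.mem_image.1 hy
    rw [Multiset.mem_toFinset, Polynomial.mem_roots hne, hfm, Polynomial.IsRoot.def]
    have h1 : (T x : E) ^ D.q = T x := by exact_mod_cast congrArg Subtype.val (hT x)
    simp [h1]
  have hcard : D.q ≤ (f.map (algebraMap M E)).roots.toFinset.card := by
    have := Finset.card_le_card hsub
    rwa [Finset.card_image_of_injective _ hinj, Finset.card_univ, ← Nat.card_eq_fintype_card] at this
  have hle := Multiset.toFinset_card_le (f.map (algebraMap M E)).roots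
  have hle' := Polynomial.card_roots' (f.map (algebraMap M E))
  have hsplit : (f.map (algebraMap M E)).Splits := by
    rw [Polynomial.splits_iff_card_roots]; omega
  have hsep : f.Separable := by
    rw [← Polynomial.separable_map (algebraMap M E), ← Polynomial.nodup_roots_iff_of_splits hne hsplit,
      ← Multiset.toFinset_card_eq_card_iff_nodup]
    omega
  have : f.IsSplittingField M E := by
    rw [isSplittingField_iff_intermediateField]
    refine ⟨hsplit, ?_⟩
    rw [← D.adjoin_teich p hp]
    congr 1
    ext x
    have hf0 : f ≠ 0 := fun h => hne (by simp [h])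
    rw [Polynomial.mem_rootSet, and_iff_right hf0]
    simp [hf, sub_eq_zero]
  exact IsGalois.of_separable_splitting_field hsep

end Galois

/-! ### Units are norms -/

theorem sq_dvd_prod_one_add {R ι : Type*} [CommRing R] (T : R) (a : ι → R) (s : Finset ι) :
    T ^ 2 ∣ ∏ i ∈ s, (1 + T * a i) - (1 + T * ∑ i ∈ s, a i) := by
  classical
  induction s using Finset.induction_on with
  | empty => simp
  | insert j s hj ih =>
    rw [Finset.prod_insert hj, Finset.sum_insert hj]
    obtain ⟨c, hc⟩ := ih
    rw [sub_eq_iff_eq_add] at hc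
    rw [hc]
    exact ⟨c + T * a j * c + a j * ∑ i ∈ s, a i, by ring⟩

section Action

variable {G : Type*} [Group G] [Fintype G] [MulSemiringAction G D.A]

/-- If `G` acts faithfully on the residue field, then it is the full Galois group of the residue
field over its fixed field, and the trace of an extension of finite fields is onto. -/
theorem exists_isUnit_sum [FaithfulSMul G D.k] :
    ∃ z : D.A, IsUnit (∑ g : G, g • z) := by
  obtain ⟨x, hx⟩ := Algebra.trace_surjective (FixedPoints.subfield G D.k) D.k 1
  obtain ⟨z, rfl⟩ := IsLocalRing.residue_surjective x
  refine ⟨z, D.isUnit_iff_residue.2 ?_⟩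
  have h := trace_eq_sum_automorphisms (K := FixedPoints.subfield G D.k)
    (IsLocalRing.residue D.A z)
  rw [hx, map_one, ← (FixedPoints.toAlgAutMulEquiv G D.k).toEquiv.sum_comp] at h
  rw [map_sum]
  have h' : ∑ g : G, IsLocalRing.residue D.A (g • z) = 1 := h.symm
  rw [h']
  exact one_ne_zero

/-- Surjectivity of the norm of an extension of finite fields, lifted to the valuation ring. -/
theorem exists_dvd_prod_sub [FaithfulSMul G D.k] (y : D.A) (hy : ∀ g : G, g • y = y) :
    ∃ x : D.A, D.t ∣ ∏ g : G, g • x - y := by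
  obtain ⟨x, hx⟩ := FiniteField.norm_surjective (FixedPoints.subfield G D.k) D.k
    ⟨IsLocalRing.residue D.A y, fun g => by
      rw [← IsLocalRing.ResidueField.residue_smul, hy]⟩
  obtain ⟨z, rfl⟩ := IsLocalRing.residue_surjective x
  refine ⟨z, D.residue_eq_iff.1 ?_⟩
  have h := Algebra.norm_eq_prod_automorphisms (FixedPoints.subfield G D.k)
    (IsLocalRing.residue D.A z)
  rw [hx, ← (FixedPoints.toAlgAutMulEquiv G D.k).toEquiv.prod_comp] at h
  rw [map_prod]
  exact h.symm

theorem smul_prod_smul (g : G) (x : D.A) : g • ∏ h : G, h • x = ∏ h : G, h • x := by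
  rw [Finset.smul_prod']
  simp_rw [smul_smul]
  exact Equiv.prod_comp (Equiv.mulLeft g) (fun h => h • x)

theorem smul_sum_smul (g : G) (x : D.A) : g • ∑ h : G, h • x = ∑ h : G, h • x := by
  rw [Finset.smul_sum]
  simp_rw [smul_smul]
  exact Equiv.sum_comp (Equiv.mulLeft g) (fun h => h • x)

/-- One step of the successive approximation: an approximate solution of `∏ g • x = y` modulo
`t ^ i` is multiplied by `1 + t ^ i * w`, which changes the product by `1 + t ^ i * ∑ g • w` up to
`t ^ (2 * i)`; since the trace is onto the fixed elements, `w` can be chosen to improve the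
congruence. -/
theorem exists_improve (ht : ∀ g : G, g • D.t = D.t) {z : D.A} (hz : IsUnit (∑ g : G, g • z))
    {y : D.A} (hyu : IsUnit y) (hy : ∀ g : G, g • y = y) {i : ℕ} (hi : 1 ≤ i) {x : D.A}
    (hx : D.t ^ i ∣ ∏ g : G, g • x - y) :
    ∃ x' : D.A, D.t ^ i ∣ x' - x ∧ D.t ^ (i + 1) ∣ ∏ g : G, g • x' - y := by
  set P := ∏ g : G, g • x with hP
  set u := ∑ g : G, g • z with hu
  have hti : ∀ g : G, g • D.t ^ i = D.t ^ i := fun g => by rw [smul_pow', ht]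
  obtain ⟨e, he⟩ := hx
  have he_fix : ∀ g : G, g • e = e := by
    intro g
    have h1 : g • (P - y) = P - y := by rw [smul_sub, hy, hP, D.smul_prod_smul]
    rw [he, smul_mul', hti] at h1
    exact mul_left_cancel₀ (pow_ne_zero i D.t_ne_zero) h1
  have hPu : IsUnit P := by
    rw [D.isUnit_iff_residue] at hyu ⊢
    have : IsLocalRing.residue D.A P = IsLocalRing.residue D.A y :=
      D.residue_eq_iff.2 (he ▸ (dvd_pow_self _ (by omega)).mul_right e)
    rwa [this]
  obtain ⟨b, hb⟩ := (hz.mul hPu).exists_right_inv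
  have hb_fix : ∀ g : G, g • b = b := by
    intro g
    have h1 : g • (u * P * b) = u * P * b := by rw [hb, smul_one]
    rw [smul_mul', smul_mul', hu, hP, D.smul_prod_smul, D.smul_sum_smul] at h1
    exact (hz.mul hPu).mul_left_cancel h1
  refine ⟨x * (1 + D.t ^ i * (z * (-(e * b)))), ⟨x * (z * (-(e * b))), by ring⟩, ?_⟩
  have hprod : ∏ g : G, g • (x * (1 + D.t ^ i * (z * (-(e * b))))) =
      P * ∏ g : G, (1 + D.t ^ i * (g • z * (-(e * b)))) := by
    rw [hP, ← Finset.prod_mul_distrib]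
    refine Finset.prod_congr rfl fun g _ => ?_
    rw [smul_mul', smul_add, smul_one, smul_mul', hti, smul_mul', smul_neg, smul_mul', he_fix,
      hb_fix]
  obtain ⟨d, hd⟩ := sq_dvd_prod_one_add (D.t ^ i) (fun g : G => g • z * (-(e * b))) Finset.univ
  rw [← Finset.sum_mul, ← hu, sub_eq_iff_eq_add] at hd
  rw [hprod, hd]
  have : P * ((D.t ^ i) ^ 2 * d + (1 + D.t ^ i * (u * -(e * b)))) - y =
      (D.t ^ i) ^ 2 * (P * d) := by
    linear_combination he - D.t ^ i * e * hb
  rw [this, ← pow_mul]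
  exact (pow_dvd_pow _ (by omega)).mul_right _

/-- The group norm is onto the invariant units of the valuation ring, when `G` fixes the uniformizer
and acts faithfully on the residue field. -/
theorem exists_prod_smul_eq [FaithfulSMul G D.k] (ht : ∀ g : G, g • D.t = D.t)
    {y : D.A} (hyu : IsUnit y) (hy : ∀ g : G, g • y = y) : ∃ x : D.A, ∏ g : G, g • x = y := by
  obtain ⟨z, hz⟩ := D.exists_isUnit_sum (G := G)
  obtain ⟨x₀, hx₀⟩ := D.exists_dvd_prod_sub (G := G) y hy
  choose! next hnext₁ hnext₂ using
    fun (i : ℕ) (hi : 1 ≤ i) (x : D.A) (hx : D.t ^ i ∣ ∏ g : G, g • x - y) =>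
      D.exists_improve ht hz hyu hy hi hx
  let f : ℕ → D.A := fun n => Nat.rec x₀ (fun n x => next (n + 1) x) n
  have hf : ∀ n, D.t ^ (n + 1) ∣ ∏ g : G, g • f n - y := by
    intro n
    induction n with
    | zero => simpa [f] using hx₀
    | succ n ih => exact hnext₂ (n + 1) (by omega) (f n) ih
  obtain ⟨L, hL⟩ := D.exists_limit f fun n =>
    (pow_dvd_pow _ (Nat.le_succ n)).trans (hnext₁ (n + 1) (by omega) (f n) (hf n))
  refine ⟨L, sub_eq_zero.1 (D.eq_zero_of_forall_dvd fun n => ?_)⟩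
  have h1 : D.t ^ n ∣ ∏ g : G, g • f n - ∏ g : G, g • L := by
    rw [← Ideal.mem_span_singleton, ← Ideal.Quotient.eq, map_prod, map_prod]
    refine Finset.prod_congr rfl fun g _ => ?_
    rw [Ideal.Quotient.eq, Ideal.mem_span_singleton, ← smul_sub]
    obtain ⟨c, hc⟩ := hL n
    exact ⟨g • c, by rw [hc, smul_mul', smul_pow', ht]⟩
  have h2 := (pow_dvd_pow D.t (Nat.le_succ n)).trans (hf n)
  have := dvd_sub h2 h1
  rwa [show ∏ g : G, g • f n - y - (∏ g : G, g • f n - ∏ g : G, g • L) =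
    ∏ g : G, g • L - y by ring] at this

end Action

section Norm

variable {M : Type*} [Field M] [Algebra M E]

theorem ord_algEquiv (p : M) (hp : algebraMap M E p = D.π) (σ : E ≃ₐ[M] E) (x : E) :
    D.ord (σ x) = D.ord x := by
  by_cases hx : x = 0
  · simp [hx]
  · have := D.ord_map (σ : E →* E) 1 (by simp [← hp]) hx
    simpa using this

/-- The Galois group acts on the valuation ring, since it preserves `ord`. -/
@[reducible] def galAction (p : M) (hp : algebraMap M E p = D.π) :
    MulSemiringAction (E ≃ₐ[M] E) D.A where
  smul σ a := ⟨σ a, by rw [mem_A, D.ord_algEquiv p hp]; exact a.2⟩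
  one_smul _ := rfl
  mul_smul _ _ _ := rfl
  smul_zero σ := Subtype.ext (map_zero σ)
  smul_add σ a b := Subtype.ext (map_add σ (a : E) b)
  smul_one σ := Subtype.ext (map_one σ)
  smul_mul σ a b := Subtype.ext (map_mul σ (a : E) b)

theorem mem_A_of_pow_eq {x : E} (hx : x ^ D.q = x) : x ∈ D.A := by
  have hq := D.one_lt_q
  rw [mem_A]
  by_cases h0 : x = 0
  · simp [h0, D.ord_zero]
  · have h := D.ord_pow x D.q
    rw [hx] at h
    have := D.ord_ne_top h0
    lift D.ord x to ℤ using this with n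
    have h' : n = D.q * n := by
      rw [← WithTop.coe_nsmul, WithTop.coe_inj, nsmul_eq_mul] at h
      exact h
    have : (D.q - 1 : ℤ) * n = 0 := by linear_combination -h'
    rcases mul_eq_zero.1 this with h | h
    · omega
    · simp [h]

variable [FiniteDimensional M E]

/-- An automorphism acting trivially on the residue field fixes the Teichmüller lifts, which
generate `E`. -/
theorem faithful (p : M) (hp : algebraMap M E p = D.π) :
    letI := D.galAction p hp
    FaithfulSMul (E ≃ₐ[M] E) D.k := by
  let := D.galAction p hp
  refine ⟨fun {σ τ} h => ?_⟩
  have teich : ∀ x : E, x ^ D.q = x → σ x = τ x := by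
    intro x hx
    have hxA := D.mem_A_of_pow_eq hx
    have hpow : ∀ g : E ≃ₐ[M] E, (g • (⟨x, hxA⟩ : D.A)) ^ D.q = g • (⟨x, hxA⟩ : D.A) := by
      intro g
      rw [← smul_pow']
      exact congrArg (g • ·) (Subtype.ext hx)
    exact congrArg Subtype.val (D.teich_unique (hpow σ) (hpow τ)
      (h (IsLocalRing.residue D.A ⟨x, hxA⟩)))
  refine AlgEquiv.ext fun x => ?_
  have hx : x ∈ IntermediateField.adjoin M {x : E | x ^ D.q = x} := by
    rw [D.adjoin_teich p hp]; trivial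
  induction hx using IntermediateField.adjoin_induction with
  | mem x hx => exact teich x hx
  | algebraMap m => simp
  | add x y _ _ hx hy => rw [map_add, map_add, hx, hy]
  | inv x _ hx => rw [map_inv₀, map_inv₀, hx]
  | mul x y _ _ hx hy => rw [map_mul, map_mul, hx, hy]

/-- Every element of `M` of order zero is a norm from `E`. -/
theorem exists_norm_eq (p : M) (hp : algebraMap M E p = D.π) (y : M)
    (hy : D.ord (algebraMap M E y) = 0) : ∃ x : E, Algebra.norm M x = y := by
  have := D.isGalois p hp
  let := D.galAction p hp
  have := D.faithful p hp
  obtain ⟨x, hx⟩ := D.exists_prod_smul_eq (G := E ≃ₐ[M] E)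
    (fun g => Subtype.ext (show g D.π = D.π by rw [← hp, g.commutes]))
    (y := ⟨algebraMap M E y, hy.ge⟩) (D.isUnit_iff.2 hy)
    (fun g => Subtype.ext (g.commutes y))
  refine ⟨x, (algebraMap M E).injective ?_⟩
  rw [Algebra.norm_eq_prod_automorphisms]
  exact (map_prod D.A.subtype (fun g : E ≃ₐ[M] E => g • x) Finset.univ).symm.trans
    (congrArg Subtype.val hx)

end Norm
end CompleteDVF

/-! ### The exact sequence -/

/-- Let `F ⊆ M ⊆ E` be a tower of finite unramified extensions of
nonarchimedean local fields.  Then `N_{E/M}` restricts to a surjective homomorphism from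
`ker(N_{E/F}) = {x ∈ E^× : N_{E/F}(x) = 1}` onto `ker(N_{M/F})`, with kernel
`ker(N_{E/M})`; i.e. the sequence
`1 → ker(N_{E/M}) → ker(N_{E/F}) → ker(N_{M/F}) → 1` (middle map `N_{E/M}`) is exact. -/
theorem statement19 {F M E : Type*} [Field F] [Field M] [Field E]
    [Algebra F M] [Algebra M E] [Algebra F E] [IsScalarTower F M E]
    [FiniteDimensional F M] [FiniteDimensional M E] [FiniteDimensional F E]
    (ordE : E → WithTop ℤ)
    (hmul : ∀ a b : E, ordE (a * b) = ordE a + ordE b)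
    (hmin : ∀ a b : E, min (ordE a) (ordE b) ≤ ordE (a + b))
    (htop : ∀ a : E, ordE a = ⊤ ↔ a = 0)
    (ϖ : F) (hϖ : ordE (algebraMap F E ϖ) = 1)
    (hunramM : ∀ m : ℤ, ∃ x : M, ordE (algebraMap M E x) = (m : WithTop ℤ))
    (hunramE : ∀ m : ℤ, ∃ x : E, ordE x = (m : WithTop ℤ))
    (hcomplete : ∀ a : ℕ → E,
      (∀ m : ℤ, ∃ N : ℕ, ∀ i, N ≤ i → ∀ j, N ≤ j → (m : WithTop ℤ) ≤ ordE (a i - a j)) →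
      ∃ l : E, ∀ m : ℤ, ∃ N : ℕ, ∀ i, N ≤ i → (m : WithTop ℤ) ≤ ordE (a i - l))
    (hres : ∃ S : Finset E, ∀ a : E, (0 : WithTop ℤ) ≤ ordE a →
      ∃ b ∈ S, (0 : WithTop ℤ) < ordE (a - b)) :
    -- `N_{E/M}` maps `ker(N_{E/F})` into `ker(N_{M/F})` …
    (∀ x : Eˣ, x ∈ (Units.map (Algebra.norm F : E →* F)).ker →
      Units.map (Algebra.norm M : E →* M) x ∈
        (Units.map (Algebra.norm F : M →* F)).ker) ∧
    -- … surjectively …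
    (∀ y ∈ (Units.map (Algebra.norm F : M →* F)).ker,
      ∃ x ∈ (Units.map (Algebra.norm F : E →* F)).ker,
        Units.map (Algebra.norm M : E →* M) x = y) ∧
    -- … and its kernel on `ker(N_{E/F})` is exactly `ker(N_{E/M})`
    (∀ x : Eˣ,
      (x ∈ (Units.map (Algebra.norm F : E →* F)).ker ∧
          Units.map (Algebra.norm M : E →* M) x = 1) ↔
        x ∈ (Units.map (Algebra.norm M : E →* M)).ker) := by
  let D : CompleteDVF E := ⟨ordE, hmul, hmin, htop, algebraMap F E ϖ, hϖ, hcomplete, hres⟩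
  have hpM : algebraMap M E (algebraMap F M ϖ) = D.π := (IsScalarTower.algebraMap_apply F M E ϖ).symm
  have hker : ∀ x : Eˣ, Units.map (Algebra.norm F : M →* F) (Units.map (Algebra.norm M : E →* M) x) =
      Units.map (Algebra.norm F : E →* F) x := fun x => Units.ext Algebra.norm_norm
  refine ⟨fun x hx => ?_, fun y hy => ?_, fun x => ⟨fun hx => hx.2, fun hx => ⟨?_, hx⟩⟩⟩
  · rw [MonoidHom.mem_ker, hker]
    exact hx
  · have hy1 : Algebra.norm F (y : M) = 1 := congrArg Units.val (MonoidHom.mem_ker.1 hy)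
    have hy0 : algebraMap M E (y : M) ≠ 0 := by simp
    have hNy : Algebra.norm F (algebraMap M E (y : M)) = 1 := by
      rw [← Algebra.norm_norm (S := M), Algebra.norm_algebraMap, map_pow, hy1, one_pow]
    have hord := D.ord_norm ϖ rfl hy0
    rw [hNy, map_one, D.ord_one] at hord
    have hzero : D.ord (algebraMap M E (y : M)) = 0 := by
      have hpos : 0 < Module.finrank F E := Module.finrank_pos
      obtain ⟨n, hn⟩ := WithTop.ne_top_iff_exists.1 (D.ord_ne_top hy0)
      rw [← hn, ← WithTop.coe_nsmul, ← WithTop.coe_zero, WithTop.coe_inj, eq_comm,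
        smul_eq_zero] at hord
      rw [← hn, hord.resolve_left hpos.ne', WithTop.coe_zero]
    obtain ⟨x, hx⟩ := D.exists_norm_eq _ hpM (y : M) hzero
    have hx0 : x ≠ 0 := by
      rintro rfl
      rw [Algebra.norm_zero] at hx
      exact y.ne_zero hx.symm
    have hxy : Units.map (Algebra.norm M : E →* M) (Units.mk0 x hx0) = y := Units.ext hx
    refine ⟨Units.mk0 x hx0, ?_, hxy⟩
    rw [MonoidHom.mem_ker, ← hker, hxy]
    exact hy
  · rw [MonoidHom.mem_ker, ← hker, MonoidHom.mem_ker.1 hx, map_one]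
end
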